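/- Morse Lemma: Let f : ℝⁿ → ℝ be a C^∞ function and let p be a nondegenerate critical point of f of index k, i.e., Df_p = 0, and there is a direct sum decomposition ℝⁿ = V₋ ⊕ V₊ with dim V₋ = k, dim V₊ = n − k, such that the Hessian D²f_p is negative definite on V₋ and positive definite on V₊. Then there exist open neighborhoods U of p and V of 0 in ℝⁿ and a C^∞ diffeomorphism φ : U → V with φ(p) = 0 and C^∞ inverse, such that for all x = (x₁, …, xₙ) ∈ V one has f(φ⁻¹(x)) = f(p) − x₁² − ⋯ − x_k² + x_{k+1}² + ⋯ + xₙ². -/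

import Mathlib

open Set Topology

theorem morse_param_integral_nat {E : Type} [NormedAddCommGroup E] [NormedSpace ℝ E]
    [FiniteDimensional ℝ E] (m : ℕ) :
    ∀ {F : Type} [NormedAddCommGroup F] [NormedSpace ℝ F] (G : E × ℝ → F)
      (_ : ContDiff ℝ (⊤ : ℕ∞) G), ContDiff ℝ (m : ℕ) (fun x => ∫ t in (0:ℝ)..1, G (x, t)) := by
  induction m with
  | zero =>
    intro F _ _ G hG
    have : ContDiff ℝ 0 (fun x => ∫ t in (0:ℝ)..1, G (x, t)) := by
      rw [contDiff_zero]
      exact intervalIntegral.continuous_parametric_intervalIntegral_of_continuous'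
        (f := fun x t => G (x, t)) hG.continuous 0 1
    exact_mod_cast this
  | succ m ih =>
    intro F _ _ G hG
    have hG' : ContDiff ℝ (⊤ : ℕ∞) (fderiv ℝ G) := hG.fderiv_right (by simp)
    let G' : E × ℝ → (E →L[ℝ] F) := fun q => (fderiv ℝ G q).comp (ContinuousLinearMap.inl ℝ E ℝ)
    have hG's : ContDiff ℝ (⊤ : ℕ∞) G' := hG'.clm_comp contDiff_const
    have hG'c : Continuous G' := hG's.continuous
    have key : ContDiff ℝ ((m : ℕ) + 1) (fun x => ∫ t in (0:ℝ)..1, G (x, t)) := by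
      rw [contDiff_succ_iff_hasFDerivAt]
      refine ⟨fun x => ∫ t in (0:ℝ)..1, G' (x, t), ih G' hG's, fun x₀ => ?_⟩
      have hK : IsCompact (Metric.closedBall x₀ 1 ×ˢ Icc (0:ℝ) 1) :=
        (isCompact_closedBall x₀ 1).prod isCompact_Icc
      obtain ⟨C, hC⟩ := hK.exists_bound_of_continuousOn hG'c.continuousOn
      refine intervalIntegral.hasFDerivAt_integral_of_dominated_of_fderiv_le
        (F := fun x t => G (x, t)) (F' := fun x t => G' (x, t)) (bound := fun _ => C)
        (Metric.closedBall_mem_nhds x₀ one_pos) ?_ ?_ ?_ ?_ ?_ ?_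
      · refine Filter.Eventually.of_forall fun x => ?_
        exact (hG.continuous.comp (by fun_prop : Continuous fun t : ℝ => (x, t))).aestronglyMeasurable
      · exact (hG.continuous.comp (by fun_prop : Continuous fun t : ℝ => (x₀, t))).intervalIntegrable _ _
      · exact (hG'c.comp (by fun_prop : Continuous fun t : ℝ => (x₀, t))).aestronglyMeasurable
      · refine Filter.Eventually.of_forall fun t ht x hx => hC _ ⟨hx, ?_⟩
        rw [uIoc_of_le zero_le_one] at ht
        exact ⟨ht.1.le, ht.2⟩
      · exact intervalIntegrable_const
      · refine Filter.Eventually.of_forall fun t ht x hx => ?_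
        have h1 : HasFDerivAt G (fderiv ℝ G (x, t)) (x, t) :=
          (hG.differentiable (by simp) _).hasFDerivAt
        exact h1.comp x (hasFDerivAt_prodMk_left x t)
    exact_mod_cast key

theorem morse_param_integral {E F : Type} [NormedAddCommGroup E] [NormedSpace ℝ E]
    [FiniteDimensional ℝ E] [NormedAddCommGroup F] [NormedSpace ℝ F] (G : E × ℝ → F)
    (hG : ContDiff ℝ (⊤ : ℕ∞) G) :
    ContDiff ℝ (⊤ : ℕ∞) (fun x => ∫ t in (0:ℝ)..1, G (x, t)) :=
  contDiff_infty.2 fun m => morse_param_integral_nat m G hG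

set_option maxSynthPendingDepth 3 in
set_option maxHeartbeats 1000000 in
theorem morse_hadamard {E : Type} [NormedAddCommGroup E] [NormedSpace ℝ E]
    [FiniteDimensional ℝ E] (f : E → ℝ) (hf : ContDiff ℝ (⊤ : ℕ∞) f) (p : E)
    (hcrit : fderiv ℝ f p = 0) :
    ∃ B : E → E →L[ℝ] E →L[ℝ] ℝ, ContDiff ℝ (⊤ : ℕ∞) B ∧ (∀ x u v, B x u v = B x v u) ∧
      (∀ x, f (p + x) = f p + B x x x) ∧ B 0 = (1/2 : ℝ) • fderiv ℝ (fderiv ℝ f) p := by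
  have hf1 : ContDiff ℝ (⊤ : ℕ∞) (fderiv ℝ f) := hf.fderiv_right (by simp)
  have hf2 : ContDiff ℝ (⊤ : ℕ∞) (fderiv ℝ (fderiv ℝ f)) := hf1.fderiv_right (by simp)
  let G : E × ℝ → (E →L[ℝ] E →L[ℝ] ℝ) :=
    fun q => (1 - q.2) • fderiv ℝ (fderiv ℝ f) (p + q.2 • q.1)
  have hG : ContDiff ℝ (⊤ : ℕ∞) G := by
    have h1 : ContDiff ℝ (⊤ : ℕ∞) (fun q : E × ℝ => 1 - q.2) := by fun_prop
    have h2 : ContDiff ℝ (⊤ : ℕ∞) (fun q : E × ℝ => p + q.2 • q.1) := by fun_prop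
    exact h1.smul (hf2.comp h2)
  have hGi : ∀ x, IntervalIntegrable (fun t => G (x, t)) MeasureTheory.volume 0 1 := fun x =>
    (hG.continuous.comp (by fun_prop : Continuous fun t : ℝ => (x, t))).intervalIntegrable _ _
  have hGi' : ∀ x u, IntervalIntegrable (fun t => G (x, t) u) MeasureTheory.volume 0 1 := fun x u =>
    ((hG.continuous.comp (by fun_prop : Continuous fun t : ℝ => (x, t))).clm_apply
      continuous_const).intervalIntegrable _ _
  have happ : ∀ x u v, (∫ t in (0:ℝ)..1, G (x, t)) u v = ∫ t in (0:ℝ)..1, G (x, t) u v := by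
    intro x u v
    rw [ContinuousLinearMap.intervalIntegral_apply (hGi x),
      ContinuousLinearMap.intervalIntegral_apply (hGi' x u)]
  refine ⟨fun x => ∫ t in (0:ℝ)..1, G (x, t), morse_param_integral G hG, ?_, ?_, ?_⟩
  · intro x u v
    rw [happ, happ]
    congr 1
    ext t
    have := (hf.contDiffAt (x := p + t • x)).isSymmSndFDerivAt
      (by rw [minSmoothness_of_isRCLikeNormedField]; exact WithTop.coe_le_coe.2 le_top) u v
    simp [G, this]
  · intro x
    rw [happ]
    let g : ℝ → ℝ := fun t => (1 - t) * fderiv ℝ f (p + t • x) x + f (p + t • x)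
    have hline : ∀ t : ℝ, HasDerivAt (fun t : ℝ => p + t • x) x t := by
      intro t
      simpa using ((hasDerivAt_id t).smul_const x).const_add p
    have hg : ∀ t ∈ uIcc (0:ℝ) 1, HasDerivAt g (G (x, t) x x) t := by
      intro t _
      have h0 : HasDerivAt (fun t => f (p + t • x)) (fderiv ℝ f (p + t • x) x) t :=
        ((hf.differentiable (by simp) _).hasFDerivAt).comp_hasDerivAt t (hline t)
      have h1 : HasDerivAt (fun t => fderiv ℝ f (p + t • x))
          (fderiv ℝ (fderiv ℝ f) (p + t • x) x) t :=
        ((hf1.differentiable (by simp) _).hasFDerivAt).comp_hasDerivAt t (hline t)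
      have h2 : HasDerivAt (fun t => fderiv ℝ f (p + t • x) x)
          (fderiv ℝ (fderiv ℝ f) (p + t • x) x x) t := by
        simpa using h1.clm_apply (hasDerivAt_const t x)
      have h3 : HasDerivAt (fun t : ℝ => 1 - t) (-1) t := by
        simpa using (hasDerivAt_id t).const_sub 1
      refine ((h3.mul h2).add h0).congr_deriv ?_
      simp [G]
    have := intervalIntegral.integral_eq_sub_of_hasDerivAt hg
      (((hG.continuous.comp (by fun_prop : Continuous fun t : ℝ => (x, t))).clm_apply
      continuous_const).clm_apply continuous_const |>.intervalIntegrable _ _)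
    rw [this]
    simp [g, hcrit]
  · simp only [G, smul_zero, add_zero]
    rw [intervalIntegral.integral_smul_const]
    congr 1
    rw [intervalIntegral.integral_sub intervalIntegrable_const
      ((by fun_prop : Continuous fun x : ℝ => x).intervalIntegrable _ _)]
    simp only [intervalIntegral.integral_const, integral_id]
    norm_num

theorem morse_ift {E F : Type} [NormedAddCommGroup E] [NormedSpace ℝ E] [CompleteSpace E]
    [NormedAddCommGroup F] [NormedSpace ℝ F]
    (g : E → F) (U : Set E) (hU : IsOpen U) (hg : ContDiffOn ℝ (⊤ : ℕ∞) g U) (a : E) (ha : a ∈ U)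
    (g' : E ≃L[ℝ] F) (hg' : HasFDerivAt g (g' : E →L[ℝ] F) a) :
    ∃ e : OpenPartialHomeomorph E F, (e : E → F) = g ∧ a ∈ e.source ∧ e.source ⊆ U ∧
      ContDiffOn ℝ (⊤ : ℕ∞) e.symm e.target := by
  have hga : ∀ x ∈ U, ContDiffAt ℝ (⊤ : ℕ∞) g x := fun x hx => hg.contDiffAt (hU.mem_nhds hx)
  let e0 := (hga a ha).toOpenPartialHomeomorph g hg' (by simp)
  have hd : ContinuousOn (fderiv ℝ g) U := hg.continuousOn_fderiv_of_isOpen hU (by exact_mod_cast le_top)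
  let W := U ∩ fderiv ℝ g ⁻¹' (range (ContinuousLinearEquiv.toContinuousLinearMap : (E ≃L[ℝ] F) → _))
  have hW : IsOpen W := hd.isOpen_inter_preimage hU ContinuousLinearEquiv.isOpen
  have hco : (e0.restrOpen W hW : E → F) = g := rfl
  refine ⟨e0.restrOpen W hW, hco, ?_, ?_, ?_⟩
  · rw [OpenPartialHomeomorph.restrOpen_source]
    exact ⟨(hga a ha).mem_toOpenPartialHomeomorph_source hg' (by simp), ha, ⟨g', hg'.fderiv.symm⟩⟩
  · rw [OpenPartialHomeomorph.restrOpen_source]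
    exact fun x hx => hx.2.1
  · intro y hy
    have hx := (e0.restrOpen W hW).map_target hy
    rw [OpenPartialHomeomorph.restrOpen_source] at hx
    obtain ⟨_, hxU, g1, hg1⟩ := hx
    refine (OpenPartialHomeomorph.contDiffAt_symm _ (f₀' := g1) hy ?_ ?_).contDiffWithinAt
    · rw [hco, hg1]
      exact ((hga _ hxU).differentiableAt (by simp)).hasFDerivAt
    · rw [hco]; exact hga _ hxU

theorem morse_sqrt {E : Type} [NormedAddCommGroup E] [NormedSpace ℝ E]
    [FiniteDimensional ℝ E] (B : E → E →L[ℝ] E →L[ℝ] ℝ) (hB : ContDiff ℝ (⊤ : ℕ∞) B)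
    (hsym : ∀ x u v, B x u v = B x v u) (hinj : Function.Injective (B 0)) :
    ∃ (U : Set E) (R : E → E →L[ℝ] E), IsOpen U ∧ (0 : E) ∈ U ∧ ContDiffOn ℝ (⊤ : ℕ∞) R U ∧
      R 0 = 1 ∧ ∀ x ∈ U, ∀ u v, B x u v = B 0 (R x u) (R x v) := by
  have hrank : Module.finrank ℝ E = Module.finrank ℝ (E →L[ℝ] ℝ) := by
    rw [← (LinearMap.toContinuousLinearMap : (E →ₗ[ℝ] ℝ) ≃ₗ[ℝ] _).finrank_eq]
    exact (Subspace.dual_finrank_eq (K := ℝ) (V := E)).symm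
  let b : E ≃L[ℝ] (E →L[ℝ] ℝ) :=
    (LinearMap.linearEquivOfInjective (B 0 : E →ₗ[ℝ] (E →L[ℝ] ℝ)) hinj hrank).toContinuousLinearEquiv
  have hb : ∀ u, b u = B 0 u := fun u => rfl
  have : CompleteSpace E := FiniteDimensional.complete ℝ E
  let A : E → (E →L[ℝ] E) := fun x => (b.symm : (E →L[ℝ] ℝ) →L[ℝ] E).comp (B x)
  have hA : ContDiff ℝ (⊤ : ℕ∞) A := contDiff_const.clm_comp hB
  have hbA : ∀ x u, B 0 (A x u) = B x u := by
    intro x u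
    rw [← hb]; simp [A]
  have hA0 : A 0 = 1 := by
    ext u
    apply hinj
    rw [hbA]; rfl
  let sq : (E →L[ℝ] E) → (E →L[ℝ] E) := fun T => T * T
  have hsq : ContDiff ℝ (⊤ : ℕ∞) sq := contDiff_id.mul contDiff_id
  let two : (E →L[ℝ] E) ≃L[ℝ] (E →L[ℝ] E) :=
    ContinuousLinearEquiv.smulLeft (Units.mk0 (2:ℝ) two_ne_zero)
  have hsq' : HasFDerivAt sq (two : (E →L[ℝ] E) →L[ℝ] (E →L[ℝ] E)) 1 := by
    refine ((hasFDerivAt_id (1 : E →L[ℝ] E)).mul' (hasFDerivAt_id (1 : E →L[ℝ] E))).congr_fderiv ?_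
    ext T v
    change (1 : E →L[ℝ] E) (T v) + T ((1 : E →L[ℝ] E) v) = (2 : ℝ) • T v
    rw [two_smul]
    rfl
  obtain ⟨e, he, h1, -, hes⟩ := morse_ift sq univ isOpen_univ hsq.contDiffOn 1 (mem_univ _) two hsq'
  have he1 : e 1 = 1 := by rw [he]; simp [sq]
  have h1t : (1 : E →L[ℝ] E) ∈ e.target := by
    have := e.map_source h1; rwa [he1] at this
  have hes1 : e.symm 1 = 1 := by
    have := e.left_inv h1; rwa [he1] at this
  let st : (E →L[ℝ] E) → (E →L[ℝ] E) := fun T =>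
    (b.symm : (E →L[ℝ] ℝ) →L[ℝ] E).comp
      (((ContinuousLinearMap.compL ℝ E E ℝ).flip T).comp (b : E →L[ℝ] (E →L[ℝ] ℝ)))
  have hst : Continuous st := by fun_prop
  have hbst : ∀ T u v, B 0 (st T u) v = B 0 u (T v) := by
    intro T u v
    rw [← hb, ← hb]; simp [st]
  have hst1 : st 1 = 1 := by
    ext u
    apply hinj
    ext v
    rw [hbst]; rfl
  let O := A ⁻¹' e.target
  have hO : IsOpen O := e.open_target.preimage hA.continuous
  let R : E → (E →L[ℝ] E) := fun x => e.symm (A x)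
  have hR : ContDiffOn ℝ (⊤ : ℕ∞) R O := hes.comp hA.contDiffOn (fun x hx => hx)
  have hR0 : R 0 = 1 := by simp only [R, hA0, hes1]
  let U := O ∩ (fun x => st (R x)) ⁻¹' e.source
  have hU : IsOpen U := (hst.comp_continuousOn hR.continuousOn).isOpen_inter_preimage hO e.open_source
  refine ⟨U, R, hU, ⟨?_, ?_⟩, hR.mono inter_subset_left, hR0, ?_⟩
  · change A 0 ∈ e.target
    rwa [hA0]
  · change st (R 0) ∈ e.source
    rwa [hR0, hst1]
  · rintro x ⟨hxO, hxS⟩ u v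
    have hRR : R x * R x = A x := by
      have := e.right_inv hxO
      rwa [he] at this
    have hRR' : ∀ w, R x (R x w) = A x w := fun w => by rw [← hRR]; rfl
    have hstR : st (R x) = R x := by
      apply e.injOn hxS (e.map_target hxO)
      rw [he]
      change st (R x) * st (R x) = R x * R x
      rw [hRR]
      ext w
      apply hinj
      ext z
      change B 0 (st (R x) (st (R x) w)) z = _
      rw [hbst, hbst, hRR', hbA, hsym 0, hbA, hsym]
    rw [← hbst, hstR, hRR', hbA]

theorem morse_diag {n k : ℕ} (B : (Fin n → ℝ) →L[ℝ] (Fin n → ℝ) →L[ℝ] ℝ)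
    (Vneg Vpos : Submodule ℝ (Fin n → ℝ))
    (hcompl : IsCompl Vneg Vpos)
    (hdimneg : Module.finrank ℝ Vneg = k)
    (hdimpos : Module.finrank ℝ Vpos = n - k)
    (hneg : ∀ v ∈ Vneg, v ≠ 0 → B v v < 0)
    (hpos : ∀ v ∈ Vpos, v ≠ 0 → 0 < B v v) :
    ∃ L : (Fin n → ℝ) ≃L[ℝ] (Fin n → ℝ), ∀ v, B v v =
      ∑ i : Fin n, (if (i : ℕ) < k then -(L v i ^ 2) else L v i ^ 2) := by
  have hkn : k ≤ n := by
    have := Submodule.finrank_le Vneg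
    simpa [hdimneg] using this
  let b2 : LinearMap.BilinMap ℝ (Fin n → ℝ) ℝ :=
    LinearMap.mk₂ ℝ (fun u v => B u v) (by simp) (by simp) (by simp) (by simp)
  obtain ⟨w', hw', ⟨e'⟩⟩ := QuadraticForm.equivalent_one_zero_neg_one_weighted_sum_squared
    (LinearMap.BilinMap.toQuadraticMap b2)
  have hfr : Module.finrank ℝ (Fin n → ℝ) = n := by simp
  obtain ⟨w, hw, e, he⟩ : ∃ w : Fin n → ℝ, (∀ i, w i = -1 ∨ w i = 0 ∨ w i = 1) ∧
      ∃ e : (Fin n → ℝ) ≃ₗ[ℝ] (Fin n → ℝ), ∀ v, B v v = ∑ i, w i * (e v i) ^ 2 := by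
    have h : ∀ v, B v v = ∑ i, w' i * (e' v i) ^ 2 := by
      intro v
      have := e'.map_app v
      rw [QuadraticMap.weightedSumSquares_apply] at this
      simp only [smul_eq_mul, ← pow_two] at this
      rw [this]; rfl
    clear_value b2
    refine ⟨fun i => w' (finCongr hfr.symm i), fun i => hw' _,
      e'.toLinearEquiv.trans (LinearEquiv.funCongrLeft ℝ ℝ (finCongr hfr.symm)), fun v => ?_⟩
    rw [h, ← (finCongr hfr.symm).sum_comp]
    rfl
  have cneg : k ≤ Fintype.card {i // w i = -1} := by
    have : Function.Injective ((LinearMap.funLeft ℝ ℝ (Subtype.val : {i // w i = -1} → Fin n)) ∘ₗ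
        (e : (Fin n → ℝ) →ₗ[ℝ] (Fin n → ℝ)) ∘ₗ Vneg.subtype) := by
      rw [injective_iff_map_eq_zero]
      rintro ⟨v, hv⟩ h0
      by_contra hne
      have h1 := hneg v hv (fun h => hne (by simpa using h))
      rw [he] at h1
      refine absurd h1 (not_lt.2 (Finset.sum_nonneg fun i _ => ?_))
      rcases hw i with h | h | h
      · have : e v i = 0 := congrFun h0 ⟨i, h⟩
        simp [this]
      · simp [h]
      · rw [h]; positivity
    have := LinearMap.finrank_le_finrank_of_injective this
    simpa [hdimneg] using this
  have cpos : n - k ≤ Fintype.card {i // w i = 1} := by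
    have : Function.Injective ((LinearMap.funLeft ℝ ℝ (Subtype.val : {i // w i = 1} → Fin n)) ∘ₗ
        (e : (Fin n → ℝ) →ₗ[ℝ] (Fin n → ℝ)) ∘ₗ Vpos.subtype) := by
      rw [injective_iff_map_eq_zero]
      rintro ⟨v, hv⟩ h0
      by_contra hne
      have h1 := hpos v hv (fun h => hne (by simpa using h))
      rw [he] at h1
      refine absurd h1 (not_lt.2 (Finset.sum_nonpos fun i _ => ?_))
      rcases hw i with h | h | h
      · rw [h]; nlinarith [sq_nonneg (e v i)]
      · simp [h]
      · have : e v i = 0 := congrFun h0 ⟨i, h⟩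
        simp [this]
    have := LinearMap.finrank_le_finrank_of_injective this
    simpa [hdimpos] using this
  rw [Fintype.card_subtype] at cneg cpos
  have hdis : Disjoint (Finset.univ.filter fun i => w i = -1) (Finset.univ.filter fun i => w i = 1) := by
    rw [Finset.disjoint_filter]
    intro i _ h h'
    rw [h] at h'; norm_num at h'
  have hle := Finset.card_le_univ ((Finset.univ.filter fun i => w i = -1) ∪
    (Finset.univ.filter fun i => w i = 1))
  have hun := Finset.card_union_of_disjoint hdis
  rw [Fintype.card_fin] at hle
  have hall : (Finset.univ.filter fun i => w i = -1) ∪ (Finset.univ.filter fun i => w i = 1)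
      = Finset.univ := by
    apply Finset.eq_univ_of_card
    rw [Fintype.card_fin]; omega
  have hw1 : ∀ i, w i ≠ -1 → w i = 1 := by
    intro i hi
    have : i ∈ (Finset.univ : Finset (Fin n)) := Finset.mem_univ i
    rw [← hall] at this
    simpa [hi] using this
  have hck : Fintype.card {i : Fin n // (i : ℕ) < k} = Fintype.card {i // w i = -1} := by
    rw [Fintype.card_subtype, Fintype.card_subtype]
    have : (Finset.univ.filter fun i : Fin n => (i : ℕ) < k).card = k := by
      rw [Fin.card_filter_val_lt]; omega
    omega
  let s : Equiv.Perm (Fin n) := (Fintype.equivOfCardEq hck).extendSubtype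
  have hs1 : ∀ i : Fin n, (i : ℕ) < k → w (s i) = -1 := fun i hi =>
    (Fintype.equivOfCardEq hck).extendSubtype_mem i hi
  have hs2 : ∀ i : Fin n, ¬ (i : ℕ) < k → w (s i) = 1 := fun i hi =>
    hw1 _ ((Fintype.equivOfCardEq hck).extendSubtype_not_mem i hi)
  refine ⟨(e.trans (LinearEquiv.funCongrLeft ℝ ℝ s)).toContinuousLinearEquiv, fun v => ?_⟩
  rw [he, ← Equiv.sum_comp s]
  refine Finset.sum_congr rfl fun i _ => ?_
  have hL : (e.trans (LinearEquiv.funCongrLeft ℝ ℝ s)).toContinuousLinearEquiv v i = e v (s i) := rfl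
  rw [hL]
  split_ifs with h
  · rw [hs1 i h]; ring
  · rw [hs2 i h]; ring

/-- **Morse Lemma.** If `p` is a nondegenerate critical point of index `k` of a smooth
function `f : ℝⁿ → ℝ` (the Hessian is negative definite on a `k`-dimensional subspace
`V₋` and positive definite on a complementary `(n-k)`-dimensional subspace `V₊`), then
there are neighborhoods `U` of `p` and `V` of `0` and a smooth diffeomorphism
`φ : U → V` with smooth inverse `ψ` and `φ p = 0` such that
`f(ψ x) = f(p) - x₁² - ⋯ - x_k² + x_{k+1}² + ⋯ + xₙ²` on `V`. -/
theorem morse_lemma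
    {n k : ℕ} (f : (Fin n → ℝ) → ℝ) (hf : ContDiff ℝ (⊤ : ℕ∞) f)
    (p : Fin n → ℝ) (hcrit : fderiv ℝ f p = 0)
    (Vneg Vpos : Submodule ℝ (Fin n → ℝ))
    (hcompl : IsCompl Vneg Vpos)
    (hdimneg : Module.finrank ℝ Vneg = k)
    (hdimpos : Module.finrank ℝ Vpos = n - k)
    (hneg : ∀ v ∈ Vneg, v ≠ 0 → fderiv ℝ (fderiv ℝ f) p v v < 0)
    (hpos : ∀ v ∈ Vpos, v ≠ 0 → 0 < fderiv ℝ (fderiv ℝ f) p v v) :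
    ∃ (U V : Set (Fin n → ℝ)) (φ ψ : (Fin n → ℝ) → (Fin n → ℝ)),
      IsOpen U ∧ IsOpen V ∧ p ∈ U ∧ (0 : Fin n → ℝ) ∈ V ∧
      ContDiffOn ℝ (⊤ : ℕ∞) φ U ∧ ContDiffOn ℝ (⊤ : ℕ∞) ψ V ∧
      Set.MapsTo φ U V ∧ Set.MapsTo ψ V U ∧
      (∀ x ∈ U, ψ (φ x) = x) ∧ (∀ y ∈ V, φ (ψ y) = y) ∧
      φ p = 0 ∧
      (∀ x ∈ V, f (ψ x) =
        f p + ∑ i : Fin n, (if (i : ℕ) < k then -(x i ^ 2) else x i ^ 2)) := by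
  obtain ⟨B, hB, hsym, hfB, hB0⟩ := morse_hadamard f hf p hcrit
  have hneg' : ∀ v ∈ Vneg, v ≠ 0 → B 0 v v < 0 := by
    intro v hv h0
    have := hneg v hv h0
    rw [hB0]
    simp only [FunLike.coe_smul, Pi.smul_apply, smul_eq_mul]
    linarith
  have hpos' : ∀ v ∈ Vpos, v ≠ 0 → 0 < B 0 v v := by
    intro v hv h0
    have := hpos v hv h0
    rw [hB0]
    simp only [FunLike.coe_smul, Pi.smul_apply, smul_eq_mul]
    linarith
  have hinj : Function.Injective (B 0) := by
    rw [injective_iff_map_eq_zero]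
    intro v hv
    obtain ⟨a, ha, c, hc, rfl⟩ : ∃ a ∈ Vneg, ∃ c ∈ Vpos, a + c = v := by
      have : v ∈ Vneg ⊔ Vpos := by rw [hcompl.sup_eq_top]; trivial
      exact Submodule.mem_sup.1 this
    have h1 : B 0 a a + B 0 c a = 0 := by
      have : B 0 (a + c) a = 0 := by rw [hv]; rfl
      simpa using this
    have h2 : B 0 a c + B 0 c c = 0 := by
      have : B 0 (a + c) c = 0 := by rw [hv]; rfl
      simpa using this
    have h3 := hsym 0 a c
    have ha0 : a = 0 := by
      by_contra hne
      have h4 := hneg' a ha hne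
      by_cases hc0 : c = 0
      · subst hc0; simp at h1; linarith
      · have := hpos' c hc hc0; linarith
    have hc0 : c = 0 := by
      by_contra hne
      have := hpos' c hc hne
      subst ha0; simp at h2; linarith
    simp [ha0, hc0]
  obtain ⟨O, R, hO, h0O, hR, hR0, hBR⟩ := morse_sqrt B hB hsym hinj
  obtain ⟨L, hL⟩ := morse_diag (B 0) Vneg Vpos hcompl hdimneg hdimpos hneg' hpos'
  let U0 : Set (Fin n → ℝ) := (fun x => x - p) ⁻¹' O
  have hU0 : IsOpen U0 := hO.preimage (by fun_prop)
  have hpU0 : p ∈ U0 := by simpa [U0] using h0O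
  have hRs : ContDiffOn ℝ (⊤ : ℕ∞) (fun x => R (x - p)) U0 :=
    hR.comp (by fun_prop : ContDiff ℝ (⊤ : ℕ∞) fun x => x - p).contDiffOn (fun x hx => hx)
  let g : (Fin n → ℝ) → (Fin n → ℝ) := fun x => L (R (x - p) (x - p))
  have hg : ContDiffOn ℝ (⊤ : ℕ∞) g U0 :=
    L.contDiff.comp_contDiffOn (hRs.clm_apply (by fun_prop))
  have hg' : HasFDerivAt g (L : (Fin n → ℝ) →L[ℝ] (Fin n → ℝ)) p := by
    have hRd : HasFDerivAt (fun x => R (x - p)) (fderiv ℝ (fun x => R (x - p)) p) p :=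
      ((hRs.contDiffAt (hU0.mem_nhds hpU0)).differentiableAt (by simp)).hasFDerivAt
    have h := L.hasFDerivAt.comp p (hRd.clm_apply ((hasFDerivAt_id p).sub_const p))
    refine h.congr_fderiv ?_
    ext v i
    simp [hR0]
  obtain ⟨e, he, hpe, hes, hsm⟩ := morse_ift g U0 hU0 hg p hpU0 L hg'
  have hgp : g p = 0 := by simp [g]
  refine ⟨e.source, e.target, g, e.symm, e.open_source, e.open_target, hpe, ?_, hg.mono hes, hsm,
    ?_, ?_, ?_, ?_, hgp, ?_⟩
  · have := e.map_source hpe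
    rwa [he, hgp] at this
  · intro x hx
    have := e.map_source hx
    rwa [he] at this
  · exact fun y hy => e.map_target hy
  · intro x hx
    have := e.left_inv hx
    rwa [he] at this
  · intro y hy
    have := e.right_inv hy
    rwa [he] at this
  · intro y hy
    have hgy : g (e.symm y) = y := by
      have := e.right_inv hy
      rwa [he] at this
    have hyU : e.symm y - p ∈ O := hes (e.map_target hy)
    have h1 := hfB (e.symm y - p)
    rw [add_sub_cancel, hBR _ hyU, hL] at h1
    rw [h1]
    change f p + ∑ i : Fin n, (if (i : ℕ) < k then -(g (e.symm y) i ^ 2) else g (e.symm y) i ^ 2) = _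
    rw [hgy]
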